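/- Assume (K0)–(K3) and let K be a compact subset of Ω with positive Lebesgue measure. Then 𝒢(χ_K) ≍ δ^γ on Ω, i.e. there is a constant C > 0 (depending on K) such that C⁻¹ δ(x)^γ ≤ 𝒢(χ_K)(x) ≤ C δ(x)^γ for every x ∈ Ω. -/

import Mathlib

/-!
The kernel bounds are reduced to pointwise bounds for `y ∈ K` with constants independent of `x`.
Write `r = |x - y|`, `d > 0` for a lower bound of `δ` on `K`, `D` for a bound of all distances in
`Ω` and `M` for an upper bound of `δ` on `Ω`.

* Lower bound: `r ≤ D` and `2s - n ≤ 0` give `r ^ (2s - n) ≥ D ^ (2s - n)`, and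
  `min (δ(x) δ(y) / r²) 1 ≥ min (d / D²) (1 / M) * δ(x)`.
* Upper bound: `min (δ(x) δ(y) / r²) 1 ≤ C δ(x)`, because either `r ≥ d / 2`, or `r < d / 2` and
  then `δ(x) ≥ δ(y) - r ≥ d / 2`. Hence `𝔾(x, y) ≤ C δ(x) ^ γ r ^ (2s - n)`.

The upper bound is integrated using that `|z| ^ (2s - n)` is integrable near the origin (polar
coordinates, since `2s > 0`) and that `K ⊆ ball x D`; the lower bound is integrated over `K`, which
has positive finite measure.
-/

open MeasureTheory Metric Set Filter Topology

noncomputable section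

abbrev Euc (n : ℕ) : Type := EuclideanSpace ℝ (Fin n)

/-- Distance to the boundary of `Ω`. -/
noncomputable def bdist {n : ℕ} (Ω : Set (Euc n)) (x : Euc n) : ℝ :=
  Metric.infDist x (frontier Ω)

/-- The two-sided model kernel `H(x,y)` of hypothesis (K2). -/
noncomputable def Hker {n : ℕ} (Ω : Set (Euc n)) (s γ : ℝ) (x y : Euc n) : ℝ :=
  dist x y ^ (2 * s - (n : ℝ)) *
    (min (bdist Ω x * bdist Ω y / dist x y ^ (2 : ℝ)) 1) ^ γ

/-- The Green operator `𝒢(f)(x) = ∫_Ω 𝔾(x,y) f(y) dy` of hypothesis (K0). -/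
noncomputable def Gop {n : ℕ} (Ω : Set (Euc n)) (G : Euc n → Euc n → ℝ)
    (f : Euc n → ℝ) (x : Euc n) : ℝ :=
  ∫ y in Ω, G x y * f y

/-- The Riesz kernel is integrable on every ball around the origin. -/
lemma integrableOn_norm_rpow_ball {n : ℕ} (hn : 0 < n) {s : ℝ} (hs : 0 < s) {R : ℝ} (hR : 0 < R) :
    IntegrableOn (fun z : Euc n => ‖z‖ ^ (2 * s - (n : ℝ))) (ball 0 R) := by
  have : Nonempty (Fin n) := ⟨⟨0, hn⟩⟩
  rw [integrableOn_fun_norm_addHaar (volume : Measure (Euc n))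
    (f := fun r : ℝ => r ^ (2 * s - (n : ℝ)))]
  have h : IntegrableOn (fun r : ℝ => r ^ (2 * s - 1)) (Ioo 0 R) :=
    (intervalIntegral.integrableOn_Ioo_rpow_iff hR).2 (by linarith)
  refine h.congr_fun ?_ measurableSet_Ioo
  intro r hr
  have hn1 : ((n - 1 : ℕ) : ℝ) = (n : ℝ) - 1 := by
    rw [Nat.cast_sub hn]; simp
  simp only [finrank_euclideanSpace, Fintype.card_fin, smul_eq_mul]
  rw [← Real.rpow_natCast, ← Real.rpow_add hr.1, hn1]
  congr 1
  ring

/-- The Riesz potential of a set lying in `ball x R` is bounded independently of the set and of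
the centre `x`. -/
lemma setIntegral_dist_rpow_le {n : ℕ} (hn : 0 < n) {s : ℝ} (hs : 0 < s) {R : ℝ} (hR : 0 < R)
    (K : Set (Euc n)) (x : Euc n) (hKx : K ⊆ ball x R) :
    IntegrableOn (fun y => dist x y ^ (2 * s - (n : ℝ))) K ∧
    ∫ y in K, dist x y ^ (2 * s - (n : ℝ)) ≤
      ∫ z in ball (0 : Euc n) R, ‖z‖ ^ (2 * s - (n : ℝ)) := by
  have hmp : MeasurePreserving (fun y : Euc n => y - x) volume volume :=
    measurePreserving_sub_right volume x
  have hemb : MeasurableEmbedding (fun y : Euc n => y - x) :=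
    (MeasurableEquiv.subRight x).measurableEmbedding
  have hpre : (fun y : Euc n => y - x) ⁻¹' (ball 0 R) = ball x R := by
    ext y; simp [dist_eq_norm]
  have hfun : (fun y => dist x y ^ (2 * s - (n : ℝ))) =
      (fun z : Euc n => ‖z‖ ^ (2 * s - (n : ℝ))) ∘ (fun y => y - x) := by
    funext y; simp [dist_eq_norm, norm_sub_rev]
  have hint : IntegrableOn (fun y => dist x y ^ (2 * s - (n : ℝ))) (ball x R) := by
    rw [hfun, ← hpre]
    exact (hmp.integrableOn_comp_preimage hemb).2 (integrableOn_norm_rpow_ball hn hs hR)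
  refine ⟨hint.mono_set hKx, ?_⟩
  calc ∫ y in K, dist x y ^ (2 * s - (n : ℝ))
      ≤ ∫ y in ball x R, dist x y ^ (2 * s - (n : ℝ)) :=
        setIntegral_mono_set hint (ae_of_all _ fun y => Real.rpow_nonneg dist_nonneg _)
          hKx.eventuallyLE
    _ = ∫ z in ball (0 : Euc n) R, ‖z‖ ^ (2 * s - (n : ℝ)) := by
        rw [hfun, ← hpre]
        exact hmp.setIntegral_preimage_emb hemb (fun z : Euc n => ‖z‖ ^ (2 * s - (n : ℝ))) _

lemma bdist_pos {n : ℕ} (hn : 0 < n) {Ω : Set (Euc n)} (hΩo : IsOpen Ω)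
    (hΩb : Bornology.IsBounded Ω) {x : Euc n} (hx : x ∈ Ω) : 0 < bdist Ω x := by
  have : Nonempty (Fin n) := ⟨⟨0, hn⟩⟩
  have hne : (frontier Ω).Nonempty := by
    rw [nonempty_frontier_iff]
    refine ⟨⟨x, hx⟩, ?_⟩
    rintro rfl
    exact NoncompactSpace.noncompact_univ (X := Euc n)
      (isCompact_of_isClosed_isBounded isClosed_univ hΩb)
  refine (isClosed_frontier.notMem_iff_infDist_pos hne).1 ?_
  intro h
  rw [hΩo.frontier_eq] at h
  exact h.2 hx

lemma bdist_le_add {n : ℕ} (Ω : Set (Euc n)) (x y : Euc n) :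
    bdist Ω x ≤ bdist Ω y + dist x y :=
  infDist_le_infDist_add_dist

/-- Lower bound for the kernel when `y` stays at distance at least `d` from the boundary. -/
lemma Hker_lower {n : ℕ} (Ω : Set (Euc n)) {s γ d D M : ℝ} (hγ : 0 < γ)
    (hsn : 2 * s ≤ (n : ℝ)) (hd : 0 < d) (hD : 0 < D) (hM : 0 < M) {x y : Euc n} (hxy : x ≠ y)
    (hx0 : 0 ≤ bdist Ω x) (hxM : bdist Ω x ≤ M) (hy : d ≤ bdist Ω y) (hr : dist x y ≤ D) :
    D ^ (2 * s - (n : ℝ)) * (min (d / D ^ 2) (1 / M)) ^ γ * bdist Ω x ^ γ ≤ Hker Ω s γ x y := by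
  have hr0 : 0 < dist x y := dist_pos.2 hxy
  have hy0 : 0 < bdist Ω y := hd.trans_le hy
  have hc : 0 < min (d / D ^ 2) (1 / M) := lt_min (by positivity) (by positivity)
  unfold Hker
  rw [mul_assoc, ← Real.mul_rpow hc.le hx0]
  have h1 : D ^ (2 * s - (n : ℝ)) ≤ dist x y ^ (2 * s - (n : ℝ)) :=
    Real.rpow_le_rpow_of_nonpos hr0 hr (by linarith)
  have h2 : min (d / D ^ 2) (1 / M) * bdist Ω x ≤
      min (bdist Ω x * bdist Ω y / dist x y ^ (2 : ℝ)) 1 := by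
    rw [Real.rpow_two]
    refine le_min ?_ ?_
    · calc min (d / D ^ 2) (1 / M) * bdist Ω x ≤ d / D ^ 2 * bdist Ω x := by
            gcongr; exact min_le_left _ _
        _ = bdist Ω x * d / D ^ 2 := by ring
        _ ≤ bdist Ω x * bdist Ω y / dist x y ^ 2 := by gcongr
    · calc min (d / D ^ 2) (1 / M) * bdist Ω x ≤ 1 / M * M := by
            gcongr; exact min_le_right _ _
        _ = 1 := by field_simp
  exact mul_le_mul h1 (Real.rpow_le_rpow (by positivity) h2 hγ.le) (by positivity)
    (by positivity)

/-- Upper bound for the kernel when `y` stays at distance at least `d` from the boundary. -/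
lemma Hker_upper {n : ℕ} (Ω : Set (Euc n)) {s γ d M : ℝ} (hγ : 0 < γ)
    (hd : 0 < d) (hM : 0 < M) {x y : Euc n} (hxy : x ≠ y)
    (hx0 : 0 ≤ bdist Ω x) (hy : d ≤ bdist Ω y) (hyM : bdist Ω y ≤ M) :
    Hker Ω s γ x y ≤
      (M / (d / 2) ^ 2 + 2 / d) ^ γ * bdist Ω x ^ γ * dist x y ^ (2 * s - (n : ℝ)) := by
  have hr0 : 0 < dist x y := dist_pos.2 hxy
  have hy0 : 0 < bdist Ω y := hd.trans_le hy
  unfold Hker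
  rw [mul_comm, ← Real.mul_rpow (by positivity) hx0]
  gcongr
  rw [Real.rpow_two, add_mul]
  rcases le_or_gt (d / 2) (dist x y) with h | h
  · refine (min_le_left _ _).trans ?_
    have h1 : bdist Ω x * bdist Ω y / dist x y ^ 2 ≤ bdist Ω x * M / (d / 2) ^ 2 := by gcongr
    have h2 : 0 ≤ 2 / d * bdist Ω x := by positivity
    calc _ ≤ _ := h1
      _ = M / (d / 2) ^ 2 * bdist Ω x := by ring
      _ ≤ _ := by linarith
  · refine (min_le_right _ _).trans ?_
    have hb := bdist_le_add Ω y x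
    rw [dist_comm] at hb
    have h1 : d / 2 ≤ bdist Ω x := by linarith
    have h2 : 0 ≤ M / (d / 2) ^ 2 * bdist Ω x := by positivity
    have h3 : 2 / d * (d / 2) ≤ 2 / d * bdist Ω x := by gcongr
    have h4 : 2 / d * (d / 2) = 1 := by field_simp
    linarith

/-- for `K ⋐ Ω` compact of positive measure, `𝒢(χ_K) ≍ δ^γ` on Ω. -/
theorem statement4 {n : ℕ} (Ω : Set (Euc n)) (s γ Λ : ℝ) (G : Euc n → Euc n → ℝ)
    (hΩo : IsOpen Ω) (hΩb : Bornology.IsBounded Ω) (hΩne : Ω.Nonempty)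
    (hs0 : 0 < s) (hs1 : s ≤ 1) (hγ0 : 0 < γ) (hγ1 : γ ≤ 1) (hsn : 2 * s ≤ (n : ℝ))
    (hGm : Measurable (Function.uncurry G)) (hGpos : ∀ x y, 0 ≤ G x y)
    (hGsym : ∀ x y, G x y = G y x) (hΛ : 1 ≤ Λ)
    (hK2 : ∀ x ∈ Ω, ∀ y ∈ Ω, x ≠ y →
      Λ⁻¹ * Hker Ω s γ x y ≤ G x y ∧ G x y ≤ Λ * Hker Ω s γ x y)
    (K : Set (Euc n)) (hK : IsCompact K) (hKΩ : K ⊆ Ω) (hKpos : 0 < volume K) :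
    ∃ C : ℝ, 0 < C ∧ ∀ x ∈ Ω,
      C⁻¹ * bdist Ω x ^ γ ≤ Gop Ω G (K.indicator fun _ => 1) x ∧
      Gop Ω G (K.indicator fun _ => 1) x ≤ C * bdist Ω x ^ γ := by
  have hn : 0 < n := by
    have : (0 : ℝ) < n := by linarith
    exact_mod_cast this
  have : Nonempty (Fin n) := ⟨⟨0, hn⟩⟩
  have hKm : MeasurableSet K := hK.measurableSet
  have hKne : K.Nonempty := nonempty_of_measure_ne_zero hKpos.ne'
  have hΛ0 : 0 < Λ := by linarith
  obtain ⟨y₀, hy₀, hmin⟩ := hK.exists_isMinOn hKne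
    (continuous_infDist_pt (frontier Ω)).continuousOn
  obtain ⟨d, hd, hdK⟩ : ∃ d : ℝ, 0 < d ∧ ∀ y ∈ K, d ≤ bdist Ω y :=
    ⟨bdist Ω y₀, bdist_pos hn hΩo hΩb (hKΩ hy₀), fun y hy => hmin hy⟩
  obtain ⟨D, hD, hDΩ⟩ : ∃ D : ℝ, 0 < D ∧ ∀ x ∈ Ω, ∀ y ∈ Ω, dist x y < D :=
    ⟨diam Ω + 1, by positivity, fun x hx y hy =>
      (dist_le_diam_of_mem hΩb hx hy).trans_lt (lt_add_one _)⟩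
  obtain ⟨M, hM, hMΩ⟩ : ∃ M : ℝ, 0 < M ∧ ∀ x ∈ Ω, bdist Ω x ≤ M := by
    have h0 := bdist_pos hn hΩo hΩb (hKΩ hy₀)
    refine ⟨bdist Ω y₀ + D, by positivity, fun x hx => ?_⟩
    have h1 := bdist_le_add Ω x y₀
    have h2 := hDΩ x hx y₀ (hKΩ hy₀)
    linarith
  have hvol : 0 < volume.real K := ENNReal.toReal_pos hKpos.ne' hK.measure_lt_top.ne
  set I : ℝ := ∫ z in ball (0 : Euc n) D, ‖z‖ ^ (2 * s - (n : ℝ)) with hI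
  have hI0 : 0 ≤ I := integral_nonneg fun z => Real.rpow_nonneg (norm_nonneg _) _
  set a : ℝ := Λ⁻¹ * (D ^ (2 * s - (n : ℝ)) * (min (d / D ^ 2) (1 / M)) ^ γ) with ha
  have ha0 : 0 < a := by
    have hc : 0 < min (d / D ^ 2) (1 / M) := lt_min (by positivity) (by positivity)
    positivity
  set b : ℝ := Λ * (M / (d / 2) ^ 2 + 2 / d) ^ γ with hb
  have hb0 : 0 < b := by positivity
  refine ⟨(a * volume.real K)⁻¹ + b * I, by positivity, fun x hx => ?_⟩
  have hx0 : 0 < bdist Ω x := bdist_pos hn hΩo hΩb hx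
  have hδ : 0 < bdist Ω x ^ γ := Real.rpow_pos_of_pos hx0 γ
  have hGop : Gop Ω G (K.indicator fun _ => 1) x = ∫ y in K, G x y := by
    have hfun : (fun y => G x y * K.indicator (fun _ => (1 : ℝ)) y) =
        K.indicator (fun y => G x y) := by
      funext y
      by_cases hy : y ∈ K <;> simp [hy]
    unfold Gop
    rw [hfun, setIntegral_indicator hKm, inter_eq_self_of_subset_right hKΩ]
  -- the diagonal, where the two-sided kernel bound is not assumed, is a null set
  have hne : ∀ᵐ y ∂(volume.restrict K), x ≠ y := by
    refine ae_restrict_of_ae ?_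
    filter_upwards [compl_mem_ae_iff.2 (measure_singleton x)] with y hy h
    exact hy h.symm
  have hmem : ∀ᵐ y ∂(volume.restrict K), y ∈ K := ae_restrict_mem hKm
  have hlow : ∀ᵐ y ∂(volume.restrict K), a * bdist Ω x ^ γ ≤ G x y := by
    filter_upwards [hne, hmem] with y hxy hy
    have h := Hker_lower Ω (s := s) hγ0 hsn hd hD hM hxy hx0.le (hMΩ x hx) (hdK y hy)
      (hDΩ x hx y (hKΩ hy)).le
    calc a * bdist Ω x ^ γ = Λ⁻¹ * (D ^ (2 * s - (n : ℝ)) *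
          (min (d / D ^ 2) (1 / M)) ^ γ * bdist Ω x ^ γ) := by rw [ha]; ring
      _ ≤ Λ⁻¹ * Hker Ω s γ x y := by gcongr
      _ ≤ G x y := (hK2 x hx y (hKΩ hy) hxy).1
  have hup : ∀ᵐ y ∂(volume.restrict K),
      G x y ≤ b * bdist Ω x ^ γ * dist x y ^ (2 * s - (n : ℝ)) := by
    filter_upwards [hne, hmem] with y hxy hy
    have h := Hker_upper Ω (s := s) hγ0 hd hM hxy hx0.le (hdK y hy) (hMΩ y (hKΩ hy))
    calc G x y ≤ Λ * Hker Ω s γ x y := (hK2 x hx y (hKΩ hy) hxy).2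
      _ ≤ Λ * _ := mul_le_mul_of_nonneg_left h hΛ0.le
      _ = _ := by rw [hb]; ring
  obtain ⟨hRint, hRle⟩ := setIntegral_dist_rpow_le hn hs0 hD K x
    (fun y hy => by rw [mem_ball]; exact hDΩ y (hKΩ hy) x hx)
  have hRint' := hRint.const_mul (b * bdist Ω x ^ γ)
  have hGint : IntegrableOn (fun y => G x y) K := by
    refine Integrable.mono' hRint' (hGm.comp measurable_prodMk_left).aestronglyMeasurable ?_
    filter_upwards [hup] with y hy
    rwa [Real.norm_of_nonneg (hGpos x y)]
  rw [hGop]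
  constructor
  · have h1 : ∫ _ in K, a * bdist Ω x ^ γ ≤ ∫ y in K, G x y :=
      integral_mono_ae (integrableOn_const hK.measure_lt_top.ne) hGint hlow
    rw [setIntegral_const, smul_eq_mul] at h1
    have h2 : ((a * volume.real K)⁻¹ + b * I)⁻¹ ≤ a * volume.real K := by
      refine inv_le_of_inv_le₀ (by positivity) ?_
      have : 0 ≤ b * I := by positivity
      linarith
    calc _ ≤ a * volume.real K * bdist Ω x ^ γ := by gcongr
      _ = volume.real K * (a * bdist Ω x ^ γ) := by ring
      _ ≤ _ := h1
  · have h1 : ∫ y in K, G x y ≤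
        ∫ y in K, b * bdist Ω x ^ γ * dist x y ^ (2 * s - (n : ℝ)) :=
      integral_mono_ae hGint hRint' hup
    rw [integral_const_mul] at h1
    have h2 : 0 ≤ (a * volume.real K)⁻¹ := by positivity
    calc _ ≤ _ := h1
      _ ≤ b * bdist Ω x ^ γ * I := by gcongr
      _ = (b * I) * bdist Ω x ^ γ := by ring
      _ ≤ _ := by gcongr; linarith
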